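/- arXiv:math/9707203 — 2 statements merged into one kernel-verified Lean document; each statement's English description precedes it below -/
import Mathlib

section
/- Let L be a bounded partial order (i.e., L has a least element 0 and a greatest element 1), n ≥ 1, and κ an infinite cardinal. If κ < μₙ(L), then 2^κ < νₙ(L). In particular, κ < μ_∞(L) implies 2^κ < ν_∞(L). -/
universe u v w

open Cardinal

/-- A well-ordered chain: a chain whose induced strict order is well-founded. -/
def IsWellChain {L : Type u} [PartialOrder L] (A : Set L) : Prop :=
  IsChain (· ≤ ·) A ∧ A.WellFoundedOn (· < ·)

/-- A co-well-ordered chain: a chain well-ordered under the reverse order. -/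
def IsCoWellChain {L : Type u} [PartialOrder L] (A : Set L) : Prop :=
  IsChain (· ≤ ·) A ∧ A.WellFoundedOn (· > ·)

/-- A subset of a partial order is uniform if it is an antichain, a well-ordered chain,
or a co-well-ordered chain. -/
def IsUniform {L : Type u} [PartialOrder L] (A : Set L) : Prop :=
  IsAntichain (· ≤ ·) A ∨ IsWellChain A ∨ IsCoWellChain A

/-- `mu L` is the least cardinal `m` such that `L` has no uniform subset of cardinality `m`. -/
noncomputable def mu (L : Type u) [PartialOrder L] : Cardinal.{u} :=
  sInf {m : Cardinal.{u} | ¬ ∃ A : Set L, IsUniform A ∧ #A = m}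

/-- `nu2 L₁ L₂` is the least cardinal `n` such that there is no family of `n` pairwise
incomparable monotone functions from `L₁` to `L₂` (functions ordered pointwise). -/
noncomputable def nu2 (L₁ : Type u) (L₂ : Type v) [PartialOrder L₁] [PartialOrder L₂] :
    Cardinal.{max u v} :=
  sInf {n : Cardinal.{max u v} |
    ¬ ∃ S : Set (L₁ → L₂), (∀ f ∈ S, Monotone f) ∧ IsAntichain (· ≤ ·) S ∧ #S = n}

/-- `nu L = nu2 L L`. -/
noncomputable def nu (L : Type u) [PartialOrder L] : Cardinal.{u} := nu2 L L

/-- `muInf L = sup_{n} mu (Lⁿ)` for `n ≥ 1`. -/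
noncomputable def muInf (L : Type u) [PartialOrder L] : Cardinal.{u} :=
  ⨆ n : ℕ, mu (Fin (n + 1) → L)

/-- `nuInf L = sup_{n} nu (Lⁿ, L)` for `n ≥ 1`. -/
noncomputable def nuInf (L : Type u) [PartialOrder L] : Cardinal.{u} :=
  ⨆ n : ℕ, nu2 (Fin (n + 1) → L) L

/-- A function `(Fin n → L) → L` is a polynomial function if it lies in the smallest
sublattice of the function lattice containing all coordinate projections and all
constant functions. -/
def IsPolynomialFn (L : Type u) [Lattice L] (n : ℕ) (f : (Fin n → L) → L) : Prop :=
  f ∈ latticeClosure ({g : (Fin n → L) → L | ∃ i : Fin n, g = fun x => x i} ∪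
    {g : (Fin n → L) → L | ∃ c : L, g = fun _ => c})

/-- A lattice is order polynomially complete if for every `n ≥ 1` every monotone
`n`-ary function is a polynomial function. -/
def OPC (L : Type u) [Lattice L] : Prop :=
  ∀ n : ℕ, 1 ≤ n → ∀ f : (Fin n → L) → L, Monotone f → IsPolynomialFn L n f

/-- The three possible comparison types between distinct blocks of a canonical family. -/
inductive CompType : Type
  | lt
  | gt
  | incomp

/-- The relation on `L` associated to a comparison type. -/
def CompType.rel {L : Type u} [PartialOrder L] : CompType → L → L → Prop
  | .lt, a, b => a < b
  | .gt, a, b => b < a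
  | .incomp, a, b => ¬ a ≤ b ∧ ¬ b ≤ a

/-- A family of subsets of `L` is canonical if each member is uniform, all members are
of the same type, and comparison between elements of distinct members depends only on
the pair of indices. -/
def IsCanonical {L : Type u} [PartialOrder L] {ι : Type v} (A : ι → Set L) : Prop :=
  ((∀ i, IsAntichain (· ≤ ·) (A i)) ∨ (∀ i, IsWellChain (A i)) ∨ (∀ i, IsCoWellChain (A i))) ∧
  ∃ F : ι → ι → CompType, ∀ i j, i ≠ j → ∀ a ∈ A i, ∀ b ∈ A j, (F i j).rel a b

/-!
A partial order `L` has many pairwise incomparable monotone maps `P → L` as soon as the powerset of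
a large set `T` embeds into `P →o L`, because the graphs of the functions `T → T` form an antichain
of `2 ^ #T` subsets of `T × T`. If `P = Lⁿ` has a large antichain `A`, send `X ⊆ A` to the
indicator of its upper closure. If `Lⁿ` has a large well-ordered chain, so has `L`, by projecting to
a suitable coordinate; if `B` is such a chain in `L`, send `X ⊆ B \ {⊤}` to the map taking `x` to
the least element of `B \ X` above `x`. Co-well-ordered chains are handled by duality.
-/

theorem exists_isAntichain_mk_eq_two_power (T : Type u) [Infinite T] :
    ∃ 𝒜 : Set (Set T), IsAntichain (· ≤ ·) 𝒜 ∧ #𝒜 = 2 ^ #T := by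
  obtain ⟨e⟩ : Nonempty (T × T ≃ T) := by
    rw [← Cardinal.eq, mk_prod, lift_id, mul_eq_self (aleph0_le_mk T)]
  let G : (T → T) → Set T := fun f => e '' Set.univ.graphOn f
  have eq_of_le : ∀ f g, G f ≤ G g → f = g := by
    intro f g hfg
    have hgraph : Set.univ.graphOn f ⊆ Set.univ.graphOn g :=
      (Set.image_subset_image_iff e.injective).1 hfg
    funext t
    have ht : (t, f t) ∈ Set.univ.graphOn g := hgraph (Set.mem_graphOn.2 ⟨trivial, rfl⟩)
    exact (Set.mem_graphOn.1 ht).2.symm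
  have G_injective : Function.Injective G := fun f g hfg => eq_of_le f g hfg.le
  refine ⟨Set.range G, ?_, ?_⟩
  · rintro _ ⟨f, rfl⟩ _ ⟨g, rfl⟩ hne hfg
    exact hne (congrArg G (eq_of_le f g hfg))
  · rw [mk_range_eq G G_injective, ← power_def, power_self_eq (aleph0_le_mk T)]

section MuNu

theorem exists_isUniform_mk_eq_of_lt_mu {L : Type u} [PartialOrder L] {κ : Cardinal.{u}}
    (hκ : κ < mu L) : ∃ A : Set L, IsUniform A ∧ #A = κ :=
  not_not.1 (notMem_of_lt_csInf' hκ)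

variable {P : Type u} {L : Type v} [PartialOrder P] [PartialOrder L]

theorem mk_lt_nu2_of_isAntichain {S : Set (P →o L)} (hS : IsAntichain (· ≤ ·) S) :
    #S < nu2 P L := by
  have forall_lt : ∀ c : Cardinal.{max u v},
      (¬ ∃ S : Set (P → L), (∀ f ∈ S, Monotone f) ∧ IsAntichain (· ≤ ·) S ∧ #S = c) → #S < c := by
    intro c hc
    by_contra! hle
    obtain ⟨S', hS'S, rfl⟩ := le_mk_iff_exists_subset.1 hle
    refine hc ⟨(⇑) '' S', ?_, ?_, mk_image_eq DFunLike.coe_injective⟩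
    · rintro _ ⟨f, -, rfl⟩
      exact f.monotone
    · rintro _ ⟨f, hf, rfl⟩ _ ⟨g, hg, rfl⟩ hne hfg
      exact hS (hS'S hf) (hS'S hg) (fun h => hne (congrArg _ h)) hfg
  have nonempty : {c : Cardinal.{max u v} | ¬ ∃ S : Set (P → L),
      (∀ f ∈ S, Monotone f) ∧ IsAntichain (· ≤ ·) S ∧ #S = c}.Nonempty := by
    refine ⟨Order.succ #(P → L), ?_⟩
    rintro ⟨S', -, -, hS'⟩
    exact (Order.lt_succ #(P → L)).not_ge (hS' ▸ mk_set_le S')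
  exact forall_lt _ (csInf_mem nonempty)

theorem two_power_lt_nu2_of_orderEmbedding {T : Type (max u v)} [Infinite T]
    (e : Set T ↪o (P →o L)) : 2 ^ #T < nu2 P L := by
  obtain ⟨𝒜, h𝒜, hcard⟩ := exists_isAntichain_mk_eq_two_power T
  rw [← hcard, ← mk_image_eq e.injective]
  exact mk_lt_nu2_of_isAntichain (h𝒜.image_embedding e)

end MuNu

section Antichain

variable {P : Type u} {L : Type v} [Preorder P] [Preorder L]

theorem ite_le_ite_iff_imp {p q : Prop} [Decidable p] [Decidable q] {a b : L} (hab : a < b) :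
    (if p then b else a) ≤ (if q then b else a) ↔ (p → q) := by
  by_cases hp : p <;> by_cases hq : q <;> simp [hp, hq, hab.le, hab.not_ge]

open Classical in
/-- The embedding of the powerset of an antichain `A` into the monotone maps which sends `X ⊆ A` to
the indicator of the upper closure of `X`, with the values `a < b` in place of `0` and `1`. -/
noncomputable def antichainPowersetEmbedding {A : Set P} (hA : IsAntichain (· ≤ ·) A) {a b : L}
    (hab : a < b) : Set A ↪o (P →o L) :=
  OrderEmbedding.ofMapLEIff
    (fun X =>
      { toFun x := if ∃ p ∈ X, p.1 ≤ x then b else a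
        monotone' _ _ hxy :=
          (ite_le_ite_iff_imp hab).2 fun ⟨p, hpX, hpx⟩ => ⟨p, hpX, hpx.trans hxy⟩ })
    (by
      intro X Y
      constructor
      · intro hXY p hpX
        obtain ⟨q, hqY, hqp⟩ : ∃ q ∈ Y, q.1 ≤ p.1 :=
          (ite_le_ite_iff_imp hab).1 (hXY p.1) ⟨p, hpX, le_rfl⟩
        rwa [← Subtype.ext (hA.eq q.2 p.2 hqp)]
      · intro hXY x
        exact (ite_le_ite_iff_imp hab).2 fun ⟨p, hpX, hpx⟩ => ⟨p, hXY hpX, hpx⟩)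

end Antichain

namespace IsWellChain

variable {L : Type u} {M : Type v} [PartialOrder L] [PartialOrder M] {A B : Set L}

theorem mono (hB : IsWellChain B) (hAB : A ⊆ B) : IsWellChain A :=
  ⟨hB.1.mono hAB, hB.2.subset hAB⟩

theorem exists_isLeast (hA : IsWellChain A) (hne : A.Nonempty) : ∃ a, IsLeast A a := by
  obtain ⟨a, ha⟩ := hA.2.exists_minimal hne
  exact ⟨a, ha.prop, fun b hb => hA.1.le_of_not_gt hb ha.prop (ha.not_lt hb)⟩

theorem image (hA : IsWellChain A) {f : L → M} (hf : Monotone f) : IsWellChain (f '' A) := by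
  refine ⟨hf.isChain_image hA.1, Set.wellFoundedOn_image.2 (hA.2.mono' ?_)⟩
  intro a ha b hb hab
  exact (hA.1.total ha hb).elim
    (fun h => h.lt_of_ne (fun h => hab.ne (congrArg f h))) (fun h => absurd (hf h) hab.not_ge)

end IsWellChain

namespace IsCoWellChain

variable {L : Type u} {M : Type v} [PartialOrder L] [PartialOrder M] {A : Set L}

theorem preimage_ofDual (hA : IsCoWellChain A) : IsWellChain (OrderDual.ofDual ⁻¹' A) :=
  ⟨hA.1.symm, hA.2⟩

theorem image (hA : IsCoWellChain A) {f : L → M} (hf : Monotone f) : IsCoWellChain (f '' A) :=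
  have hdual := hA.preimage_ofDual.image hf.dual
  ⟨hdual.1.symm, hdual.2⟩

end IsCoWellChain

section LeastAbove

variable {L : Type u} [PartialOrder L] [OrderTop L]

open Classical in
/-- The least element of `S` above `x`. The value is `⊤` if there is no such element; for subsets of
a well-ordered chain this happens only if no element of `S` is above `x`. -/
noncomputable def leastAbove (S : Set L) (x : L) : L :=
  if h : ∃ m, IsLeast (S ∩ Set.Ici x) m then h.choose else ⊤

variable {A B S : Set L} {x y : L}

theorem leastAbove_eq_of_isLeast {m : L} (hm : IsLeast (S ∩ Set.Ici x) m) : leastAbove S x = m := by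
  have h : ∃ m, IsLeast (S ∩ Set.Ici x) m := ⟨m, hm⟩
  rw [leastAbove, dif_pos h]
  exact h.choose_spec.unique hm

theorem leastAbove_mem_or_eq_top (S : Set L) (x : L) :
    leastAbove S x ∈ S ∩ Set.Ici x ∨ leastAbove S x = ⊤ := by
  by_cases h : ∃ m, IsLeast (S ∩ Set.Ici x) m
  · obtain ⟨m, hm⟩ := h
    exact .inl (leastAbove_eq_of_isLeast hm ▸ hm.1)
  · exact .inr (dif_neg h)

theorem leastAbove_eq_self_iff (hx : x ≠ ⊤) : leastAbove S x = x ↔ x ∈ S := by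
  refine ⟨fun h => ?_, fun h => leastAbove_eq_of_isLeast ⟨⟨h, le_rfl⟩, fun _ hy => hy.2⟩⟩
  have hmem : leastAbove S x ∈ S ∩ Set.Ici x :=
    (leastAbove_mem_or_eq_top S x).resolve_right (h.trans_ne hx)
  rw [h] at hmem
  exact hmem.1

theorem le_leastAbove (S : Set L) (x : L) : x ≤ leastAbove S x :=
  (leastAbove_mem_or_eq_top S x).elim (fun h => h.2) (fun h => h ▸ le_top)

theorem IsWellChain.leastAbove_le (hS : IsWellChain S) (hy : y ∈ S) (hxy : x ≤ y) :
    leastAbove S x ≤ y := by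
  obtain ⟨m, hm⟩ := (hS.mono Set.inter_subset_left).exists_isLeast ⟨y, hy, hxy⟩
  exact leastAbove_eq_of_isLeast hm ▸ hm.2 ⟨hy, hxy⟩

theorem IsWellChain.leastAbove_le_leastAbove (hB : IsWellChain B) (hAB : A ⊆ B) (hxy : x ≤ y) :
    leastAbove B x ≤ leastAbove A y := by
  rcases leastAbove_mem_or_eq_top A y with h | h
  · exact hB.leastAbove_le (hAB h.1) (hxy.trans h.2)
  · exact h ▸ le_top

end LeastAbove

/-- The embedding of the powerset of `B \ {⊤}`, for a well-ordered chain `B`, into the monotone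
self-maps, which sends `X` to the map taking `x` to the least element of `B \ X` above `x`. The
element `⊤` is left out because `leastAbove` is `⊤` at `⊤` whether or not `⊤ ∈ X`. -/
noncomputable def IsWellChain.powersetEmbedding {L : Type u} [PartialOrder L] [OrderTop L]
    {B : Set L} (hB : IsWellChain B) : Set ↥(B \ {⊤}) ↪o (L →o L) :=
  OrderEmbedding.ofMapLEIff
    (fun X =>
      { toFun := leastAbove (B \ (↑) '' X)
        monotone' _ _ hxy :=
          (hB.mono Set.sdiff_subset).leastAbove_le_leastAbove subset_rfl hxy })
    (by
      intro X Y
      constructor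
      · intro hXY b hbX
        by_contra hbY
        have leastAbove_Y : leastAbove (B \ (↑) '' Y) b.1 = b :=
          (leastAbove_eq_self_iff b.2.2).2 ⟨b.2.1, mt Subtype.val_injective.mem_set_image.1 hbY⟩
        have leastAbove_X : leastAbove (B \ (↑) '' X) b.1 = b :=
          le_antisymm ((hXY b.1).trans_eq leastAbove_Y) (le_leastAbove _ _)
        exact ((leastAbove_eq_self_iff b.2.2).1 leastAbove_X).2 ⟨b, hbX, rfl⟩
      · intro hXY x
        exact (hB.mono Set.sdiff_subset).leastAbove_le_leastAbove
          (Set.sdiff_subset_sdiff_right (Set.image_mono hXY)) le_rfl)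

/-- The dual of `IsWellChain.powersetEmbedding`, precomposed with complementation so that it is
again order-preserving. -/
noncomputable def IsCoWellChain.powersetEmbedding {L : Type u} [PartialOrder L] [OrderBot L]
    {B : Set L} (hB : IsCoWellChain B) : Set ↥(B \ {⊥}) ↪o (L →o L) :=
  (OrderIso.compl _).toOrderEmbedding.trans <|
    hB.preimage_ofDual.powersetEmbedding.dual.trans (OrderHom.dualIso L L).symm.toOrderEmbedding

/-- Precomposition with the projection to the coordinate `i`, which turns families of unary monotone
functions into families of `ι`-ary ones. -/
def evalPrecompEmbedding {ι : Type v} (i : ι) (L : Type u) (M : Type w) [Preorder L]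
    [PartialOrder M] : (L →o M) ↪o ((ι → L) →o M) :=
  OrderEmbedding.ofMapLEIff (fun f => f.comp (Pi.evalOrderHom i))
    (fun _ _ => ⟨fun h x => h (fun _ => x), fun h x => h (x i)⟩)

theorem exists_mk_le_mk_image_eval {ι : Type v} [Finite ι] {α : ι → Type (max u v)}
    (A : Set (∀ i, α i)) [Infinite A] : ∃ i, #A ≤ #(Function.eval i '' A) := by
  have := Fintype.ofFinite ι
  by_contra! hlt
  have le_prod : #A ≤ ∏ i, #(Function.eval i '' A) := by
    let coords : A → ∀ i, Function.eval i '' A := fun a i => ⟨a.1 i, a.1, a.2, rfl⟩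
    have coords_injective : Function.Injective coords := fun a b hab =>
      Subtype.ext (funext fun i => congrArg Subtype.val (congrFun hab i))
    have hcard := mk_le_of_injective coords_injective
    rwa [mk_pi, prod_eq_of_fintype, lift_id'] at hcard
  have prod_lt : ∏ i, #(Function.eval i '' A) < #A :=
    Finset.prod_induction _ (· < #A) (fun _ _ => mul_lt_of_lt (aleph0_le_mk A))
      (one_lt_aleph0.trans_le (aleph0_le_mk A)) (fun i _ => hlt i)
  exact le_prod.not_gt prod_lt

theorem mk_sdiff_singleton_of_infinite {α : Type u} (B : Set α) [Infinite B] (t : α) :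
    #↥(B \ {t}) = #B := by
  refine (mk_le_mk_of_subset Set.sdiff_subset).antisymm (le_of_not_gt fun hlt => ?_)
  have one_lt : (1 : Cardinal) < #B := one_lt_aleph0.trans_le (aleph0_le_mk B)
  refine (le_mk_sdiff_add_mk B {t}).not_gt ?_
  rw [mk_singleton]
  exact add_lt_of_lt (aleph0_le_mk B) hlt one_lt

theorem two_power_lt_nu2_pi_of_orderEmbedding {ι : Type v} {L : Type (max u v)} [PartialOrder L]
    [Finite ι] (A : Set (ι → L)) [Infinite A] (t : L)
    (e : ∀ i, Set ↥(Function.eval i '' A \ {t}) ↪o (L →o L)) : 2 ^ #A < nu2 (ι → L) L := by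
  obtain ⟨i, hi⟩ := exists_mk_le_mk_image_eval A
  have : Infinite ↥(Function.eval i '' A) := infinite_iff.2 ((aleph0_le_mk A).trans hi)
  rw [← mk_sdiff_singleton_of_infinite _ t] at hi
  have : Infinite ↥(Function.eval i '' A \ {t}) := infinite_iff.2 ((aleph0_le_mk A).trans hi)
  exact (power_le_power_left two_ne_zero hi).trans_lt
    (two_power_lt_nu2_of_orderEmbedding ((e i).trans (evalPrecompEmbedding i L L)))

theorem two_power_lt_nu2_pi_of_lt_mu {ι : Type v} [Finite ι] {L : Type (max u v)} [PartialOrder L]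
    [BoundedOrder L] {κ : Cardinal} (hκ : ℵ₀ ≤ κ) (h : κ < mu (ι → L)) :
    2 ^ κ < nu2 (ι → L) L := by
  obtain ⟨A, hA, rfl⟩ := exists_isUniform_mk_eq_of_lt_mu h
  have : Infinite A := infinite_iff.2 hκ
  rcases hA with antichain | wellChain | coWellChain
  · have : Nontrivial L := by
      by_contra hL
      have := not_nontrivial_iff_subsingleton.1 hL
      exact not_finite A
    exact two_power_lt_nu2_of_orderEmbedding (antichainPowersetEmbedding antichain bot_lt_top)
  · exact two_power_lt_nu2_pi_of_orderEmbedding A ⊤ fun i =>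
      (wellChain.image (Function.monotone_eval i)).powersetEmbedding
  · exact two_power_lt_nu2_pi_of_orderEmbedding A ⊥ fun i =>
      (coWellChain.image (Function.monotone_eval i)).powersetEmbedding

theorem nu2_le_nuInf (L : Type u) [PartialOrder L] (n : ℕ) :
    nu2 (Fin (n + 1) → L) L ≤ nuInf L :=
  le_ciSup (f := fun n : ℕ => nu2 (Fin (n + 1) → L) L) bddAbove_of_small n

/-- For a bounded partial order `L`, `n ≥ 1` and infinite `κ`: `κ < μₙ(L)` implies
`2^κ < νₙ(L)`; in particular `κ < μ_∞(L)` implies `2^κ < ν_∞(L)`. -/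
theorem mu_n_lt_imp_two_pow_lt_nu_n (L : Type u) [PartialOrder L] [BoundedOrder L]
    (n : ℕ) (hn : 1 ≤ n) (κ : Cardinal.{u}) (hκ : ℵ₀ ≤ κ) :
    (κ < mu (Fin n → L) → 2 ^ κ < nu2 (Fin n → L) L) ∧
    (κ < muInf L → 2 ^ κ < nuInf L) := by
  refine ⟨two_power_lt_nu2_pi_of_lt_mu hκ, fun h => ?_⟩
  obtain ⟨k, hk⟩ := exists_lt_of_lt_ciSup h
  exact (two_power_lt_nu2_pi_of_lt_mu hκ hk).trans_le (nu2_le_nuInf L k)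
end

section
/- Let L be a bounded partial order (with least element 0 and greatest element 1), and let κ be a singular strong limit cardinal with κ ≤ |L|. Then ν(L) > κ. If moreover cf(κ) = ℵ₀, then ν(L) > 2^κ. -/
universe u v w

open Cardinal

/-!
The Erdős–Rado theorem and the pigeonhole principle carve out of `L` a canonical family of `cf κ`
blocks whose sizes tend to `κ`; passing to the order dual, the blocks are antichains or well-ordered
chains. A union `D` of blocks over a well-behaved set of indices then carries a strictly monotone
map `p` into a set in which every value other than `⊤` has a successor. Raising `p` to the successor
at the points of any `B ⊆ D` still extends to a monotone function on `L`, and the functions obtained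
from `B ⊄ B'` and `B' ⊄ B` are incomparable. Two blocks at a time are always well behaved: raising
one value in a fixed block, to encode the index of another block, and one value in that other block
gives `κ` incomparable functions. If `cf κ = ℵ₀`, Ramsey's theorem makes infinitely many blocks
simultaneously well behaved, so that `|D| = κ` and there is room for `2 ^ κ` such sets `B`.
-/

theorem power_le_two_power {a b s : Cardinal.{u}} (hs : ℵ₀ ≤ s) (ha : a ≤ s) (hb : b ≤ s) :
    a ^ b ≤ 2 ^ s :=
  calc a ^ b ≤ s ^ b := power_le_power_right ha
    _ ≤ s ^ s := power_le_power_left (aleph0_pos.trans_le hs).ne' hb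
    _ = 2 ^ s := power_self_eq hs

theorem aleph0_le_cof_ord {κ : Cardinal.{u}} (hκ : ℵ₀ ≤ κ) : ℵ₀ ≤ κ.ord.cof := by
  rw [Ordinal.aleph0_le_cof_iff, Ordinal.one_lt_cof_iff]
  exact isSuccLimit_ord hκ

theorem mk_lt_cof_ord_of_finite {Γ : Type u} [Finite Γ] {ρ : Cardinal.{u}} (hρ : ℵ₀ ≤ ρ) :
    #Γ < ρ.ord.cof :=
  (lt_aleph0_of_finite Γ).trans_le (aleph0_le_cof_ord hρ)

theorem mk_compl_pair_of_infinite {α : Type u} [Infinite α] (a b : α) :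
    #({a, b}ᶜ : Set α) = #α :=
  mk_compl_of_infinite _ <| (Set.toFinite {a, b}).lt_aleph0.trans_le (aleph0_le_mk α)

section Nu

variable {P : Type u} {L : Type v} [PartialOrder P] [PartialOrder L]

theorem mk_lt_nu2 {S : Set (P → L)} (hmono : ∀ f ∈ S, Monotone f)
    (hS : IsAntichain (· ≤ ·) S) : #S < nu2 P L := by
  have hne : {n : Cardinal.{max u v} | ¬ ∃ T : Set (P → L), (∀ f ∈ T, Monotone f) ∧
      IsAntichain (· ≤ ·) T ∧ #T = n}.Nonempty := by
    refine ⟨Order.succ #(P → L), ?_⟩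
    rintro ⟨T, -, -, hT⟩
    exact (Order.lt_succ #(P → L)).not_ge (hT.ge.trans (mk_set_le T))
  refine lt_of_not_ge fun hle => ?_
  obtain ⟨T, hTS, hT⟩ := le_mk_iff_exists_subset.1 hle
  exact csInf_mem hne ⟨T, fun f hf => hmono f (hTS hf), hS.subset hTS, hT⟩

theorem mk_lt_nu2_of_pairwise {T : Type max u v} (f : T → P → L) (hmono : ∀ t, Monotone (f t))
    (hf : Pairwise fun s t => ¬ f s ≤ f t) : #T < nu2 P L := by
  have hinj : f.Injective := fun s t hst => by_contra fun hne => hf hne hst.le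
  rw [← mk_range_eq f hinj]
  refine mk_lt_nu2 (Set.forall_mem_range.2 hmono) ?_
  rintro _ ⟨s, rfl⟩ _ ⟨t, rfl⟩ hne
  exact hf (ne_of_apply_ne f hne)

theorem nu2_orderDual : nu2 Pᵒᵈ Lᵒᵈ = nu2 P L :=
  congrArg sInf <| Set.ext fun _ => not_congr <| exists_congr fun _ =>
    and_congr (forall₂_congr fun _ _ => monotone_dual_iff (α := P) (β := L))
      (and_congr ⟨IsAntichain.flip, IsAntichain.flip⟩ Iff.rfl)

theorem nu_orderDual : nu Lᵒᵈ = nu L :=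
  nu2_orderDual

end Nu

section WellChain

variable {L : Type u} [PartialOrder L] {A B : Set L}

theorem IsWellChain.subset (hA : IsWellChain A) (hBA : B ⊆ A) : IsWellChain B :=
  ⟨hA.1.mono hBA, hA.2.subset hBA⟩

theorem IsCoWellChain.subset (hA : IsCoWellChain A) (hBA : B ⊆ A) : IsCoWellChain B :=
  ⟨hA.1.mono hBA, hA.2.subset hBA⟩

theorem IsUniform.subset (hA : IsUniform A) (hBA : B ⊆ A) : IsUniform B :=
  hA.imp (IsAntichain.subset · hBA) (Or.imp (IsWellChain.subset · hBA) (IsCoWellChain.subset · hBA))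

theorem isWellChain_of_isChain_of_finite (hA : IsChain (· ≤ ·) A) (hfin : A.Finite) :
    IsWellChain A :=
  ⟨hA, hfin.wellFoundedOn⟩

theorem IsWellChain.exists_isLeast_s19 (hA : IsWellChain A) (hne : A.Nonempty) :
    ∃ m, IsLeast A m := by
  obtain ⟨m, hm⟩ := hA.2.exists_minimal hne
  exact ⟨m, hm.1, fun a ha => (hA.1.total hm.1 ha).elim id (hm.2 ha)⟩

theorem isWellChain_of_exists_isLeast (h : ∀ U ⊆ A, U.Nonempty → ∃ m, IsLeast U m) :
    IsWellChain A := by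
  refine ⟨fun a ha b hb _ => ?_, Set.wellFoundedOn_iff.2 ?_⟩
  · obtain ⟨m, hm, hle⟩ := h {a, b} (Set.pair_subset ha hb) (Set.insert_nonempty a {b})
    obtain rfl | rfl : m = a ∨ m = b := hm
    · exact .inl (hle (.inr rfl))
    · exact .inr (hle (.inl rfl))
  · refine WellFounded.wellFounded_iff_has_min.2 fun U ⟨u, hu⟩ => ?_
    by_cases huA : u ∈ A
    · obtain ⟨m, hm, hle⟩ := h (U ∩ A) Set.inter_subset_right ⟨u, hu, huA⟩
      exact ⟨m, hm.1, fun x hx ⟨hlt, hxA, _⟩ => hlt.not_ge (hle ⟨hx, hxA⟩)⟩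
    · exact ⟨u, hu, fun x _ ⟨_, _, huA'⟩ => huA huA'⟩

theorem IsWellChain.insert_top [OrderTop L] (hA : IsWellChain A) : IsWellChain (insert ⊤ A) :=
  ⟨hA.1.insert fun _ _ _ => .inr le_top, hA.2.insert ⊤⟩

variable {W : Type v} [LinearOrder W] [WellFoundedLT W] {f : W → L} {V : Set W}

theorem isWellChain_image_of_strictMonoOn (hf : StrictMonoOn f V) : IsWellChain (f '' V) := by
  refine ⟨?_, Set.wellFoundedOn_image.2 <| wellFounded_lt.wellFoundedOn.mono' fun a ha b hb => ?_⟩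
  · rintro _ ⟨a, ha, rfl⟩ _ ⟨b, hb, rfl⟩ _
    exact (le_total a b).imp (hf.monotoneOn ha hb) (hf.monotoneOn hb ha)
  · exact (hf.lt_iff_lt ha hb).1

theorem isCoWellChain_image_of_strictAntiOn (hf : StrictAntiOn f V) : IsCoWellChain (f '' V) :=
  (isWellChain_image_of_strictMonoOn (L := Lᵒᵈ) hf).imp_left IsChain.symm

end WellChain

/-- A set all of whose principal up-sets are well-ordered chains: the shape needed to take least
upper bounds inside the set. -/
def IsUpperWellOrdered {L : Type u} [PartialOrder L] (E : Set L) : Prop :=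
  ∀ e ∈ E, IsWellChain (E ∩ Set.Ici e)

section UpperWellOrdered

variable {L : Type u} [PartialOrder L] {E : Set L}

theorem IsWellChain.isUpperWellOrdered (hE : IsWellChain E) : IsUpperWellOrdered E :=
  fun _ _ => hE.subset Set.inter_subset_left

theorem isUpperWellOrdered_of_isAntichain (hE : IsAntichain (· ≤ ·) E) : IsUpperWellOrdered E := by
  intro e he
  have hsub : (E ∩ Set.Ici e).Subsingleton := fun x hx y hy =>
    (hE.eq he hx.1 hx.2).symm.trans (hE.eq he hy.1 hy.2)
  exact isWellChain_of_isChain_of_finite hsub.isChain hsub.finite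

theorem isUpperWellOrdered_range_of_strictAnti {s : ℕ → L} (hs : StrictAnti s) :
    IsUpperWellOrdered (Set.range s) := by
  rintro _ ⟨n, rfl⟩
  refine isWellChain_of_isChain_of_finite
    (hs.antitone.isChain_range.mono Set.inter_subset_left) ?_
  refine ((Set.finite_Iic n).image s).subset ?_
  rintro _ ⟨⟨m, rfl⟩, hm⟩
  exact ⟨m, hs.le_iff_ge.1 hm, rfl⟩

theorem isUpperWellOrdered_pair (a b : L) : IsUpperWellOrdered {a, b} := by
  have of_le {a b : L} (hab : a ≤ b) : IsUpperWellOrdered {a, b} :=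
    (isWellChain_of_isChain_of_finite (.pair hab) (Set.toFinite _)).isUpperWellOrdered
  by_cases hab : a ≤ b
  · exact of_le hab
  by_cases hba : b ≤ a
  · exact Set.pair_comm a b ▸ of_le hba
  · exact isUpperWellOrdered_of_isAntichain (Set.pairwise_pair.2 fun _ => ⟨hab, hba⟩)

theorem IsUpperWellOrdered.mono (hE : IsUpperWellOrdered E) {E' : Set L} (h : E' ⊆ E) :
    IsUpperWellOrdered E' :=
  fun e he => (hE e (h he)).subset (Set.inter_subset_inter_left _ h)

theorem IsUpperWellOrdered.insert_top [OrderTop L] (hE : IsUpperWellOrdered E) :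
    IsUpperWellOrdered (insert ⊤ E) := by
  rintro e (rfl | he)
  · exact (isUpperWellOrdered_pair ⊤ ⊤ ⊤ (by simp)).subset fun x hx => by simpa using hx.2
  · refine (hE e he).insert_top.subset ?_
    rintro x ⟨rfl | hx, hex⟩
    · exact .inl rfl
    · exact .inr ⟨hx, hex⟩

theorem IsUpperWellOrdered.exists_isLeast_s19 (hE : IsUpperWellOrdered E) {U : Set L} (hU : U ⊆ E)
    (hne : U.Nonempty) {e : L} (he : e ∈ E) (hle : ∀ u ∈ U, e ≤ u) : ∃ m, IsLeast U m :=
  ((hE e he).subset fun u hu => ⟨hU hu, hle u hu⟩).exists_isLeast_s19 hne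

end UpperWellOrdered

/-! ### Scaffolds -/

section Scaffold

variable {P : Type u} {L : Type v}

/-- The values of the extension are least upper bounds taken inside `E`. -/
theorem IsUpperWellOrdered.exists_monotone_eqOn [Preorder P] [PartialOrder L] [BoundedOrder L]
    {E : Set L} (hE : IsUpperWellOrdered E) (htop : ⊤ ∈ E) {D : Set P} {g : P → L}
    (hg : MonotoneOn g D) (hgE : Set.MapsTo g D E) : ∃ F : P → L, Monotone F ∧ Set.EqOn F g D := by
  let U (x : P) : Set L := {u ∈ insert ⊥ E | ∀ y ∈ D, y ≤ x → g y ≤ u}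
  have hleast (x : P) : ∃ m, IsLeast (U x) m := by
    by_cases hx : ∃ y ∈ D, y ≤ x
    · obtain ⟨y, hy, hyx⟩ := hx
      refine hE.exists_isLeast_s19 ?_ ⟨⊤, .inr htop, fun _ _ _ => le_top⟩ (hgE hy)
        fun u hu => hu.2 y hy hyx
      rintro u ⟨rfl | hu, hub⟩
      · exact le_bot_iff.1 (hub y hy hyx) ▸ hgE hy
      · exact hu
    · exact ⟨⊥, ⟨.inl rfl, fun y hy hyx => absurd ⟨y, hy, hyx⟩ hx⟩, fun _ _ => bot_le⟩
  choose F hF using hleast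
  refine ⟨F, fun x y hxy => (hF x).2 ?_, fun x hx => (hF x).unique ⟨?_, ?_⟩⟩
  · exact ⟨(hF y).1.1, fun z hz hzx => (hF y).1.2 z hz (hzx.trans hxy)⟩
  · exact ⟨.inr (hgE hx), fun y hy hyx => hg hy hx hyx⟩
  · exact fun u hu => hu.2 x hx le_rfl

/-- A partial map `p` on `D` with room above each of its values: independently for every `x ∈ D`,
the value `p x` may be kept or raised, and the result still extends to a monotone function. -/
structure IsScaffold [Preorder P] [PartialOrder L] [OrderTop L] (p : P → L) (D : Set P) :
    Prop where
  strictMonoOn : StrictMonoOn p D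
  isUpperWellOrdered_image : IsUpperWellOrdered (p '' D)
  ne_top : ∀ x ∈ D, p x ≠ ⊤

variable [PartialOrder P] [PartialOrder L] [BoundedOrder L] {p : P → L} {D : Set P}

/-- Raise `p x` to its successor in `p '' D ∪ {⊤}`: by strict monotonicity this does not exceed
the value of `p` at any point of `D` above `x`. -/
theorem IsScaffold.exists_monotone_raise (hp : IsScaffold p D) (B : Set P) :
    ∃ F : P → L, Monotone F ∧ Set.EqOn F p (D \ B) ∧ ∀ x ∈ D ∩ B, p x < F x := by
  classical
  have hE := hp.isUpperWellOrdered_image.insert_top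
  have hmem {x : P} (hx : x ∈ D) : p x ∈ insert ⊤ (p '' D) := .inr ⟨x, hx, rfl⟩
  have hsucc : ∀ x ∈ D, ∃ m, IsLeast (insert ⊤ (p '' D) ∩ Set.Ioi (p x)) m := fun x hx =>
    hE.exists_isLeast_s19 Set.inter_subset_left ⟨⊤, .inl rfl, (hp.ne_top x hx).lt_top⟩ (hmem hx)
      fun u hu => hu.2.le
  choose! σ hσ using hsucc
  have hσ_le {x y : P} (hx : x ∈ D) (hy : y ∈ D) (hxy : x < y) : σ x ≤ p y :=
    (hσ x hx).2 ⟨hmem hy, hp.strictMonoOn hx hy hxy⟩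
  have hlt_σ {x : P} (hx : x ∈ D) : p x < σ x := (hσ x hx).1.2
  have hbounds {x : P} (hx : x ∈ D) : p x ≤ B.piecewise σ p x ∧ B.piecewise σ p x ≤ σ x := by
    by_cases hxB : x ∈ B <;> simp [hxB, (hlt_σ hx).le]
  have hmono : MonotoneOn (B.piecewise σ p) D := by
    intro x hx y hy hxy
    obtain rfl | hlt := hxy.eq_or_lt
    · exact le_rfl
    · exact (hbounds hx).2.trans ((hσ_le hx hy hlt).trans (hbounds hy).1)
  have hmaps : Set.MapsTo (B.piecewise σ p) D (insert ⊤ (p '' D)) := by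
    intro x hx
    by_cases hxB : x ∈ B
    · simpa only [Set.piecewise_eq_of_mem _ _ _ hxB] using (hσ x hx).1.1
    · simpa only [Set.piecewise_eq_of_notMem _ _ _ hxB] using hmem hx
  obtain ⟨F, hF, hFD⟩ := hE.exists_monotone_eqOn (.inl rfl) hmono hmaps
  refine ⟨F, hF, fun x hx => ?_, fun x hx => ?_⟩
  · rw [hFD hx.1, Set.piecewise_eq_of_notMem _ _ _ hx.2]
  · rw [hFD hx.1, Set.piecewise_eq_of_mem _ _ _ hx.2]
    exact hlt_σ hx.1

theorem mk_lt_nu2_of_isScaffold {T : Type max u v} {D B : T → Set P}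
    (hD : ∀ t, IsScaffold p (D t))
    (hsep : Pairwise fun s t => ∃ x ∈ D s ∩ D t, x ∈ B s \ B t) : #T < nu2 P L := by
  choose F hmono hkeep hraise using fun t => (hD t).exists_monotone_raise (B t)
  refine mk_lt_nu2_of_pairwise F hmono fun s t hst hle => ?_
  obtain ⟨x, ⟨hxs, hxt⟩, hxBs, hxBt⟩ := hsep hst
  exact (hraise s x ⟨hxs, hxBs⟩).not_ge ((hle x).trans_eq (hkeep t ⟨hxt, hxBt⟩))

end Scaffold

/-- The graphs of the functions `α → Bool`, transported along `α × Bool ≃ α`. -/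
theorem exists_pairwise_not_subset (α : Type u) [Infinite α] :
    ∃ B : (α → Bool) → Set α, Pairwise fun f g => ¬ B f ⊆ B g := by
  have htwo : (2 : Cardinal) ≤ #α := ofNat_le_aleph0.trans (aleph0_le_mk α)
  obtain ⟨e⟩ : Nonempty (α × Bool ≃ α) := Cardinal.eq.1 <| by
    simpa using mul_eq_left (aleph0_le_mk α) htwo two_ne_zero
  refine ⟨fun f => Set.range fun a => e (a, f a), fun f g hfg hsub => hfg (funext fun a => ?_)⟩
  obtain ⟨b, hb⟩ := hsub ⟨a, rfl⟩
  obtain ⟨rfl, hba⟩ := Prod.ext_iff.1 (e.injective hb)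
  exact hba.symm

section ScaffoldCounting

variable {P L : Type u} [PartialOrder P] [PartialOrder L] [BoundedOrder L] {p : P → L}

theorem IsScaffold.two_power_mk_lt_nu2 {D : Set P} (hD : IsScaffold p D) (hinf : D.Infinite) :
    2 ^ #D < nu2 P L := by
  have := hinf.to_subtype
  obtain ⟨B, hB⟩ := exists_pairwise_not_subset D
  have hsep : Pairwise fun f g => ∃ x ∈ D ∩ D, x ∈ (↑) '' B f \ ((↑) '' B g : Set P) := by
    intro f g hfg
    obtain ⟨x, hxf, hxg⟩ := Set.not_subset.1 (hB hfg)
    exact ⟨x, ⟨x.2, x.2⟩, ⟨x, hxf, rfl⟩, by simpa using hxg⟩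
  simpa using mk_lt_nu2_of_isScaffold (fun _ => hD) hsep

/-- The index `t = ⟨i, a⟩` raises exactly two values of `p`: the one at `a ∈ A i`, and the one at a
point of the common block `A i₀` that encodes `i`. -/
theorem mk_sigma_lt_nu2_of_isScaffold_union {I : Type u} {A : I → Set P} {i₀ : I}
    (hp : ∀ i, IsScaffold p (A i₀ ∪ A i)) (hdisj : ∀ i ≠ i₀, Disjoint (A i₀) (A i))
    (hI : #I ≤ #(A i₀)) : #(Σ i : {i // i ≠ i₀}, A i) < nu2 P L := by
  obtain ⟨code⟩ := hI
  have hne (i j : {i // i ≠ i₀}) (a : A j) : (code i : P) ≠ a :=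
    (hdisj j j.2).ne_of_mem (code i).2 a.2
  refine mk_lt_nu2_of_isScaffold (p := p) (D := fun t => A i₀ ∪ A t.1)
    (B := fun t => {(code t.1 : P), (t.2 : P)}) (fun t => hp t.1) ?_
  rintro ⟨i, a⟩ ⟨j, b⟩ hab
  obtain rfl | hij := eq_or_ne i j
  · have hab' : (a : P) ≠ b := fun h => hab (by rw [Subtype.ext h])
    exact ⟨a, ⟨.inr a.2, .inr a.2⟩, .inr rfl, by simp [hab', (hne i i a).symm]⟩
  · have hcode : (code i : P) ≠ code j := fun h =>
      hij (Subtype.ext (code.injective (Subtype.ext h)))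
    exact ⟨code i, ⟨.inl (code i).2, .inl (code i).2⟩, .inl rfl, by simp [hcode, hne i j b]⟩

end ScaffoldCounting

/-! ### Cross-homogeneous families -/

theorem exists_isUpperWellOrdered_range_comp {L : Type u} [PartialOrder L] (s : ℕ → L) :
    ∃ g : ℕ ↪o ℕ, IsUpperWellOrdered (Set.range (s ∘ g)) := by
  obtain ⟨g, hlt | hnlt⟩ := exists_increasing_or_nonincreasing_subseq (· < ·) s
  · have hmono : StrictMonoOn (s ∘ g) Set.univ := fun m _ n _ hmn => hlt m n hmn
    exact ⟨g, (Set.image_univ ▸ isWellChain_image_of_strictMonoOn hmono).isUpperWellOrdered⟩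
  obtain ⟨g', hgt | hngt⟩ := exists_increasing_or_nonincreasing_subseq (· > ·) (s ∘ g)
  · exact ⟨g'.trans g, isUpperWellOrdered_range_of_strictAnti hgt⟩
  · refine ⟨g'.trans g, isUpperWellOrdered_of_isAntichain ?_⟩
    rintro _ ⟨m, rfl⟩ _ ⟨n, rfl⟩ hne hle
    obtain hmn | rfl | hnm := lt_trichotomy m n
    · exact hnlt _ _ (g'.strictMono hmn) (hle.lt_of_ne hne)
    · exact hne rfl
    · exact hngt _ _ hnm (hle.lt_of_ne hne)

theorem exists_forall_mem_eq_of_pairwise_disjoint {ι α β : Type*} [Nonempty β] {A : ι → Set α}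
    (hA : Pairwise (Function.onFun Disjoint A)) (c : ι → β) :
    ∃ p : α → β, ∀ i, ∀ x ∈ A i, p x = c i := by
  have hinj : Function.Injective fun s : Σ i, A i => (s.2 : α) :=
    Subtype.val_injective.comp (Set.sigmaToiUnion_injective A hA)
  obtain ⟨b⟩ := ‹Nonempty β›
  exact ⟨Function.extend (fun s : Σ i, A i => (s.2 : α)) (fun s => c s.1) fun _ => b,
    fun i x hx => hinj.extend_apply _ _ ⟨i, x, hx⟩⟩

namespace CompType

variable {L : Type u} [PartialOrder L] {t : CompType} {a b a' b' : L}

theorem rel_lt_of_le (h : t.rel a b) (hab : a ≤ b) (h' : t.rel a' b') : a' < b' := by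
  cases t with
  | lt => exact h'
  | gt => exact absurd hab h.not_ge
  | incomp => exact absurd hab h.1

theorem ne_of_rel (h : t.rel a b) : a ≠ b := by
  rintro rfl
  exact (rel_lt_of_le h le_rfl h).ne rfl

theorem rel_congr (hle : a ≤ b ↔ a' ≤ b') (hge : b ≤ a ↔ b' ≤ a') (h : t.rel a b) :
    t.rel a' b' := by
  cases t with
  | lt | gt => simpa only [rel, lt_iff_le_not_ge, hle, hge] using h
  | incomp => simpa only [rel, hle, hge] using h

theorem rel_toDual (h : t.rel a b) : t.rel (OrderDual.toDual b) (OrderDual.toDual a) := by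
  cases t with
  | lt | gt => exact h
  | incomp => exact ⟨h.1, h.2⟩

end CompType

/-- The second half of `IsCanonical`: how elements of two distinct members of the family compare
depends only on the pair of indices. -/
def IsCrossHomogeneous {L : Type u} [PartialOrder L] {ι : Type v} (A : ι → Set L) : Prop :=
  ∃ F : ι → ι → CompType, ∀ i j, i ≠ j → ∀ a ∈ A i, ∀ b ∈ A j, (F i j).rel a b

namespace IsCrossHomogeneous

variable {L : Type u} [PartialOrder L] {ι : Type v} {A : ι → Set L}

theorem lt_of_le (hA : IsCrossHomogeneous A) {i j : ι} (hij : i ≠ j) {a a' b b' : L}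
    (ha : a ∈ A i) (hb : b ∈ A j) (hab : a ≤ b) (ha' : a' ∈ A i) (hb' : b' ∈ A j) : a' < b' := by
  obtain ⟨F, hF⟩ := hA
  exact CompType.rel_lt_of_le (hF i j hij a ha b hb) hab (hF i j hij a' ha' b' hb')

theorem pairwise_disjoint (hA : IsCrossHomogeneous A) : Pairwise (Function.onFun Disjoint A) := by
  obtain ⟨F, hF⟩ := hA
  exact fun i j hij => Set.disjoint_left.2 fun a hai haj =>
    CompType.ne_of_rel (hF i j hij a hai a haj) rfl

theorem comp (hA : IsCrossHomogeneous A) {κ : Type w} {f : κ → ι} (hf : f.Injective) :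
    IsCrossHomogeneous (A ∘ f) := by
  obtain ⟨F, hF⟩ := hA
  exact ⟨fun i j => F (f i) (f j), fun i j hij => hF _ _ (hf.ne hij)⟩

theorem orderDual (hA : IsCrossHomogeneous A) :
    IsCrossHomogeneous fun i => (OrderDual.ofDual ⁻¹' A i : Set Lᵒᵈ) := by
  obtain ⟨F, hF⟩ := hA
  exact ⟨fun i j => F j i, fun i j hij a ha b hb =>
    CompType.rel_toDual (L := L) (hF j i hij.symm _ hb _ ha)⟩

theorem isUpperWellOrdered_biUnion (hA : IsCrossHomogeneous A) (hwell : ∀ i, IsWellChain (A i))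
    {c : ι → L} (hc : ∀ i, c i ∈ A i) {J : Set ι} (hJ : IsUpperWellOrdered (c '' J)) :
    IsUpperWellOrdered (⋃ j ∈ J, A j) := by
  intro d hd
  obtain ⟨i, hi, hdi⟩ := Set.mem_iUnion₂.1 hd
  refine isWellChain_of_exists_isLeast fun U hU hne => ?_
  have hblock : ∀ x ∈ U, ∃ j ∈ J, x ∈ A j := fun x hx => by
    simpa only [Set.mem_iUnion₂, exists_prop] using (hU hx).1
  have hcle : ∀ v ∈ c '' {j ∈ J | (U ∩ A j).Nonempty}, c i ≤ v := by
    rintro _ ⟨j, ⟨-, x, hxU, hxj⟩, rfl⟩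
    obtain rfl | hij := eq_or_ne i j
    · exact le_rfl
    · exact (hA.lt_of_le hij hdi hxj (hU hxU).2 (hc i) (hc j)).le
  have hne' : (c '' {j ∈ J | (U ∩ A j).Nonempty}).Nonempty := by
    obtain ⟨x, hx⟩ := hne
    obtain ⟨j, hj, hxj⟩ := hblock x hx
    exact ⟨c j, j, ⟨hj, x, hx, hxj⟩, rfl⟩
  obtain ⟨_, ⟨j, ⟨-, hUj⟩, rfl⟩, hcj⟩ :=
    hJ.exists_isLeast_s19 (Set.image_mono (Set.sep_subset J _)) hne' ⟨i, hi, rfl⟩ hcle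
  obtain ⟨m, hm, hmle⟩ := ((hwell j).subset Set.inter_subset_right).exists_isLeast_s19 hUj
  refine ⟨m, hm.1, fun y hy => ?_⟩
  obtain ⟨k, hk, hyk⟩ := hblock y hy
  obtain rfl | hjk := eq_or_ne j k
  · exact hmle ⟨hy, hyk⟩
  · exact (hA.lt_of_le hjk (hc j) (hc k) (hcj ⟨k, ⟨hk, y, hy, hyk⟩, rfl⟩) hm.2 hyk).le

/-- For well-ordered blocks `p` is the identity; for antichains it collapses each block to its
representative. -/
theorem exists_isScaffold_biUnion [BoundedOrder L] (hA : IsCrossHomogeneous A)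
    (hblocks : (∀ i, IsAntichain (· ≤ ·) (A i)) ∨ ∀ i, IsWellChain (A i))
    (htop : ∀ i, ⊤ ∉ A i) {c : ι → L} (hc : ∀ i, c i ∈ A i) :
    ∃ p : L → L, ∀ J : Set ι, IsUpperWellOrdered (c '' J) → IsScaffold p (⋃ j ∈ J, A j) := by
  obtain hanti | hwell := hblocks
  · have : Nonempty L := ⟨⊤⟩
    obtain ⟨p, hp⟩ := exists_forall_mem_eq_of_pairwise_disjoint hA.pairwise_disjoint c
    refine ⟨p, fun J hJ => ⟨fun x hx y hy hxy => ?_, hJ.mono ?_, fun x hx => ?_⟩⟩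
    · obtain ⟨i, -, hxi⟩ := Set.mem_iUnion₂.1 hx
      obtain ⟨j, -, hyj⟩ := Set.mem_iUnion₂.1 hy
      have hij : i ≠ j := by
        rintro rfl
        exact hxy.ne ((hanti i).eq hxi hyj hxy.le)
      rw [hp i x hxi, hp j y hyj]
      exact hA.lt_of_le hij hxi hyj hxy.le (hc i) (hc j)
    · rintro _ ⟨x, hx, rfl⟩
      obtain ⟨i, hi, hxi⟩ := Set.mem_iUnion₂.1 hx
      exact ⟨i, hi, (hp i x hxi).symm⟩
    · obtain ⟨i, -, hxi⟩ := Set.mem_iUnion₂.1 hx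
      rw [hp i x hxi]
      exact ne_of_mem_of_not_mem (hc i) (htop i)
  · refine ⟨id, fun J hJ => ⟨strictMono_id.strictMonoOn _, ?_, fun x hx => ?_⟩⟩
    · simpa using hA.isUpperWellOrdered_biUnion hwell hc hJ
    · obtain ⟨i, -, hxi⟩ := Set.mem_iUnion₂.1 hx
      exact ne_of_mem_of_not_mem hxi (htop i)

end IsCrossHomogeneous

/-- The sizes `θ i` exhaust `κ` along cofinally many indices, whichever `cf κ` indices are kept. The
bound `#I ≤ θ i` leaves room to encode an index by an element of each block of size `θ i`. -/
structure IsExhausting (κ : Cardinal.{u}) {I : Type u} (θ : I → Cardinal.{u}) : Prop where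
  mk_index : #I = κ.ord.cof
  mk_index_le : ∀ i, #I ≤ θ i
  exists_lt : ∀ J : Set I, #J = #I → ∀ μ < κ, ∃ i ∈ J, μ < θ i

namespace IsExhausting

variable {κ : Cardinal.{u}} {I : Type u} {θ : I → Cardinal.{u}}

theorem restrict (hθ : IsExhausting κ θ) {J : Set I} (hJ : #J = #I) :
    IsExhausting κ fun j : J => θ j where
  mk_index := hJ.trans hθ.mk_index
  mk_index_le j := hJ.trans_le (hθ.mk_index_le j)
  exists_lt K hK μ hμ := by
    obtain ⟨_, ⟨j, hj, rfl⟩, hlt⟩ :=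
      hθ.exists_lt ((↑) '' K) ((mk_image_eq Subtype.val_injective).trans (hK.trans hJ)) μ hμ
    exact ⟨j, hj, hlt⟩

theorem le_of_forall_le (hθ : IsExhausting κ θ) {J : Set I} (hJ : #J = #I) {μ : Cardinal.{u}}
    (h : ∀ i ∈ J, θ i ≤ μ) : κ ≤ μ := by
  by_contra! hμ
  obtain ⟨i, hi, hlt⟩ := hθ.exists_lt J hJ μ hμ
  exact hlt.not_ge (h i hi)

theorem aleph0_le_mk_index (hθ : IsExhausting κ θ) (hκ : ℵ₀ ≤ κ) : ℵ₀ ≤ #I :=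
  (aleph0_le_cof_ord hκ).trans_eq hθ.mk_index.symm

theorem nonempty {L : Type u} {A : I → Set L} (hA : IsExhausting κ fun i => #(A i)) (i : I) :
    (A i).Nonempty := by
  have : Nonempty I := ⟨i⟩
  have hpos : #(A i) ≠ 0 := ((mk_ne_zero I).pos.trans_le (hA.mk_index_le i)).ne'
  exact Set.nonempty_coe_sort.1 (mk_ne_zero_iff.1 hpos)

end IsExhausting

section CrossHomogeneousCounting

variable {L I : Type u} [PartialOrder L] [BoundedOrder L] {A : I → Set L} {κ : Cardinal.{u}}

theorem IsCrossHomogeneous.lt_nu (hA : IsCrossHomogeneous A)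
    (hblocks : (∀ i, IsAntichain (· ≤ ·) (A i)) ∨ ∀ i, IsWellChain (A i))
    (htop : ∀ i, ⊤ ∉ A i) (hsize : IsExhausting κ fun i => #(A i)) (hκ : ℵ₀ ≤ κ) :
    κ < nu L := by
  have := infinite_iff.2 (hsize.aleph0_le_mk_index hκ)
  choose c hc using hsize.nonempty
  obtain ⟨p, hp⟩ := hA.exists_isScaffold_biUnion hblocks htop hc
  let i₀ : I := Classical.arbitrary I
  have hpair (i : I) : IsScaffold p (A i₀ ∪ A i) := by
    simpa only [Set.biUnion_pair] using
      hp {i₀, i} (Set.image_pair c i₀ i ▸ isUpperWellOrdered_pair (c i₀) (c i))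
  refine lt_of_le_of_lt ?_ (mk_sigma_lt_nu2_of_isScaffold_union hpair
    (fun i hi => hA.pairwise_disjoint hi.symm) (hsize.mk_index_le i₀))
  have hcompl : #({i₀}ᶜ : Set I) = #I := mk_compl_of_infinite _ <| by
    simpa using one_lt_aleph0.trans_le (aleph0_le_mk I)
  refine hsize.le_of_forall_le hcompl fun i hi => ?_
  exact mk_le_of_injective
    (sigma_mk_injective (β := fun i : {i // i ≠ i₀} => A i) (i := ⟨i, hi⟩))

theorem IsCrossHomogeneous.two_power_lt_nu (hA : IsCrossHomogeneous A)
    (hblocks : (∀ i, IsAntichain (· ≤ ·) (A i)) ∨ ∀ i, IsWellChain (A i))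
    (htop : ∀ i, ⊤ ∉ A i) (hsize : IsExhausting κ fun i => #(A i)) (hκ : ℵ₀ ≤ κ)
    (hcof : κ.ord.cof = ℵ₀) : 2 ^ κ < nu L := by
  have hI : #I = ℵ₀ := hsize.mk_index.trans hcof
  have := infinite_iff.2 hI.ge
  choose c hc using hsize.nonempty
  obtain ⟨p, hp⟩ := hA.exists_isScaffold_biUnion hblocks htop hc
  let e := Infinite.natEmbedding I
  obtain ⟨g, hg⟩ := exists_isUpperWellOrdered_range_comp (c ∘ e)
  have hD := hp (Set.range (e ∘ g)) (by rwa [← Set.range_comp])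
  have hκD : κ ≤ #(⋃ j ∈ Set.range (e ∘ g), A j) := by
    have hJ : #(Set.range (e ∘ g)) = #I := by
      simpa [hI] using mk_range_eq_of_injective (e.injective.comp g.injective)
    exact hsize.le_of_forall_le hJ fun i hi => mk_le_mk_of_subset (Set.subset_biUnion_of_mem hi)
  have hinf := Set.infinite_coe_iff.1 (infinite_iff.2 (hκ.trans hκD))
  exact (power_le_power_left two_ne_zero hκD).trans_lt (hD.two_power_mk_lt_nu2 hinf)

end CrossHomogeneousCounting

/-! ### The Erdős–Rado theorem -/

section ErdosRado

variable {X W Γ : Type u} [LinearOrder W] [WellFoundedLT W] [Nonempty X]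

/-- The path leading to `x` in the Erdős–Rado tree of the coloring `c`: each entry is a fresh point
receiving from all earlier entries the same colors as `x`. Once `x` itself is reached no fresh
point need exist, and later entries are junk. -/
noncomputable def erdosRadoPath (c : X → X → Γ) (x : X) : W → X :=
  wellFounded_lt.fix fun α path => Classical.epsilon fun y =>
    ∀ β (hβ : β < α), y ≠ path β hβ ∧ c (path β hβ) y = c (path β hβ) x

variable (c : X → X → Γ)

theorem erdosRadoPath_eq_epsilon (x : X) (α : W) :
    erdosRadoPath c x α = Classical.epsilon fun y => ∀ β < α,
      y ≠ erdosRadoPath c x β ∧ c (erdosRadoPath c x β) y = c (erdosRadoPath c x β) x :=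
  WellFounded.fix_eq _ _ _

variable {c}

theorem erdosRadoPath_spec {x : X} (hx : ∀ α : W, erdosRadoPath c x α ≠ x) {β α : W}
    (hβα : β < α) : erdosRadoPath c x α ≠ erdosRadoPath c x β ∧
      c (erdosRadoPath c x β) (erdosRadoPath c x α) = c (erdosRadoPath c x β) x := by
  rw [erdosRadoPath_eq_epsilon c x α]
  exact Classical.epsilon_spec (p := fun y => ∀ β < α, y ≠ erdosRadoPath c x β ∧
    c (erdosRadoPath c x β) y = c (erdosRadoPath c x β) x)
    ⟨x, fun β _ => ⟨(hx β).symm, rfl⟩⟩ β hβα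

theorem erdosRadoPath_congr {x y : X}
    (h : ∀ β : W, c (erdosRadoPath c x β) x = c (erdosRadoPath c y β) y) (α : W) :
    erdosRadoPath c x α = erdosRadoPath c y α := by
  induction α using WellFoundedLT.induction with
  | ind α ih =>
    rw [erdosRadoPath_eq_epsilon, erdosRadoPath_eq_epsilon]
    congr 1
    funext z
    refine propext (forall₂_congr fun β hβ => ?_)
    rw [h β, ih β hβ]

theorem mk_le_of_forall_mem_range_erdosRadoPath
    (h : ∀ x, x ∈ Set.range (erdosRadoPath c x : W → X)) : #X ≤ #W * #Γ ^ #W := by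
  choose r hr using h
  let code (x : X) : W × (W → Γ) := (r x, fun β => c (erdosRadoPath c x β) x)
  have hcode : code.Injective := by
    intro x y hxy
    obtain ⟨hrank, hcolors⟩ := Prod.ext_iff.1 hxy
    rw [← hr x, ← hr y, show r x = r y from hrank]
    exact erdosRadoPath_congr (congrFun hcolors) (r y)
  simpa using mk_le_of_injective hcode

end ErdosRado

theorem exists_injective_endHomogeneous {X W Γ : Type u} [LinearOrder W] [WellFoundedLT W]
    (c : X → X → Γ) (h : #W * #Γ ^ #W < #X) :
    ∃ (a : W → X) (d : W → Γ), a.Injective ∧ ∀ β α, β < α → c (a β) (a α) = d β := by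
  have : Nonempty X := mk_ne_zero_iff.1 (pos_of_gt h).ne'
  obtain ⟨x, hx⟩ : ∃ x, x ∉ Set.range (erdosRadoPath c x : W → X) := by
    by_contra! hall
    exact h.not_ge (mk_le_of_forall_mem_range_erdosRadoPath hall)
  have hfresh (α : W) : erdosRadoPath c x α ≠ x := fun hα => hx ⟨α, hα⟩
  refine ⟨erdosRadoPath c x, fun β => c (erdosRadoPath c x β) x, ?_,
    fun β α hβα => (erdosRadoPath_spec hfresh hβα).2⟩
  exact .of_lt_imp_ne fun β α hβα => (erdosRadoPath_spec hfresh hβα).1.symm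

namespace CompType

instance : Finite CompType :=
  .of_surjective (![lt, gt, incomp] : Fin 3 → CompType) fun
    | lt => ⟨0, rfl⟩
    | gt => ⟨1, rfl⟩
    | incomp => ⟨2, rfl⟩

open scoped Classical in
/-- The comparison type of a pair of distinct elements; equal elements get the junk value
`incomp`. -/
noncomputable def ofPair {L : Type u} [PartialOrder L] (a b : L) : CompType :=
  if a < b then lt else if b < a then gt else incomp

theorem rel_ofPair {L : Type u} [PartialOrder L] {a b : L} (hab : a ≠ b) :
    (ofPair a b).rel a b := by
  unfold ofPair
  split_ifs with hlt hgt
  · exact hlt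
  · exact hgt
  · exact ⟨fun hle => hlt (hle.lt_of_ne hab), fun hle => hgt (hle.lt_of_ne hab.symm)⟩

end CompType

theorem isUniform_image_of_forall_rel {L : Type u} {W : Type v} [PartialOrder L] [LinearOrder W]
    [WellFoundedLT W] {a : W → L} {V : Set W} (t : CompType)
    (h : ∀ β ∈ V, ∀ α ∈ V, β < α → t.rel (a β) (a α)) : IsUniform (a '' V) := by
  cases t with
  | lt => exact .inr <| .inl <| isWellChain_image_of_strictMonoOn fun β hβ α hα => h β hβ α hα
  | gt => exact .inr <| .inr <| isCoWellChain_image_of_strictAntiOn fun β hβ α hα => h β hβ α hα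
  | incomp =>
    refine .inl ?_
    rintro _ ⟨β, hβ, rfl⟩ _ ⟨α, hα, rfl⟩ hne
    obtain hlt | rfl | hgt := lt_trichotomy β α
    · exact (h β hβ α hα hlt).1
    · exact absurd rfl hne
    · exact (h α hα β hβ hgt).2

/-- The coloring sends a pair to its comparison type; thinning an end-homogeneous sequence once
more makes it homogeneous. -/
theorem exists_isUniform_of_two_power_lt {L : Type u} [PartialOrder L] {X : Set L}
    {ρ : Cardinal.{u}} (hρ : ℵ₀ ≤ ρ) (hX : 2 ^ ρ < #X) : ∃ A ⊆ X, #A = ρ ∧ IsUniform A := by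
  have hW : #ρ.ord.ToType = ρ := mk_ord_toType ρ
  have hpow : #ρ.ord.ToType * #(ULift.{u} CompType) ^ #ρ.ord.ToType ≤ 2 ^ ρ := by
    rw [hW]
    calc ρ * #(ULift.{u} CompType) ^ ρ ≤ 2 ^ ρ * 2 ^ ρ := by
          gcongr
          · exact (cantor ρ).le
          · exact power_le_two_power hρ
              ((lt_aleph0_of_finite (ULift.{u} CompType)).le.trans hρ) le_rfl
      _ = 2 ^ ρ := mul_eq_self (hρ.trans (cantor ρ).le)
  obtain ⟨a, d, ha, hd⟩ := exists_injective_endHomogeneous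
    (fun x y : X => ULift.up.{u} (CompType.ofPair (x : L) y)) (hpow.trans_lt hX)
  obtain ⟨t, ht⟩ := infinite_pigeonhole d (hρ.trans_eq hW.symm)
    (mk_lt_cof_ord_of_finite (hρ.trans_eq hW.symm))
  have ha' : Function.Injective fun β => (a β : L) := Subtype.val_injective.comp ha
  refine ⟨(fun β => (a β : L)) '' (d ⁻¹' {t}), ?_, ?_, isUniform_image_of_forall_rel t.down ?_⟩
  · rintro _ ⟨β, -, rfl⟩
    exact (a β).2
  · rw [mk_image_eq ha', ht, hW]
  · intro β hβ α _ hβα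
    have hcolor : CompType.ofPair (a β : L) (a α) = t.down :=
      congrArg ULift.down ((hd β α hβα).trans hβ)
    exact hcolor ▸ CompType.rel_ofPair (ha'.ne hβα.ne)

/-! ### Existence of canonical families -/

theorem exists_subset_mk_eq_forall_eq {X γ : Type u} {A : Set X} (hreg : (#A).IsRegular)
    (hγ : #γ < #A) (f : X → γ) : ∃ A' ⊆ A, #A' = #A ∧ ∀ x ∈ A', ∀ y ∈ A', f x = f y := by
  obtain ⟨c, A', hsub, hcard, hc⟩ := infinite_pigeonhole_set (s := A) (fun x => f x) #A le_rfl
    hreg.aleph0_le (by rwa [hreg.cof_ord])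
  exact ⟨A', hsub, (mk_le_mk_of_subset hsub).antisymm hcard,
    fun x hx y hy => (hc hx).trans (hc hy).symm⟩

/-- Thin `A i` twice: first so that all its points look alike from every earlier block, then so
that they look alike to a representative `r j` of every block. For `i < j`, `a ∈ A i` and `b ∈ A j`
this gives `c a b = c a (r j) = c a' (r j) = c a' b'`. -/
theorem exists_subset_mk_eq_forall_lt_eq {X Γ I : Type u} [LinearOrder I] (c : X → X → Γ)
    {A : I → Set X} (hreg : ∀ i, (#(A i)).IsRegular)
    (hbelow : ∀ i, #((⋃ j : Set.Iio i, A j) → Γ) < #(A i)) (hindex : ∀ i, #(I → Γ) < #(A i)) :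
    ∃ A' : I → Set X, (∀ i, A' i ⊆ A i) ∧ (∀ i, #(A' i) = #(A i)) ∧
      ∀ i j, i < j → ∀ a ∈ A' i, ∀ a' ∈ A' i, ∀ b ∈ A' j, ∀ b' ∈ A' j, c a b = c a' b' := by
  choose B hBA hBcard hB using fun i =>
    exists_subset_mk_eq_forall_eq (hreg i) (hbelow i) fun b a => c a b
  have hBne (i : I) : (B i).Nonempty := by
    have hpos : #(B i) ≠ 0 := by
      rw [hBcard]
      exact (hreg i).pos.ne'
    exact Set.nonempty_coe_sort.1 (mk_ne_zero_iff.1 hpos)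
  choose r hr using hBne
  choose A' hA'B hA'card hA' using fun i =>
    exists_subset_mk_eq_forall_eq ((hBcard i).symm ▸ hreg i) ((hBcard i).symm ▸ hindex i)
      fun a j => c a (r j)
  refine ⟨A', fun i => (hA'B i).trans (hBA i), fun i => (hA'card i).trans (hBcard i), ?_⟩
  intro i j hij a ha a' ha' b hb b' hb'
  have toRep {x y : X} (hx : x ∈ A' i) (hy : y ∈ A' j) : c x y = c x (r j) :=
    congrFun (hB j y (hA'B j hy) (r j) (hr j))
      ⟨x, Set.mem_iUnion.2 ⟨⟨i, hij⟩, hBA i (hA'B i hx)⟩⟩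
  calc c a b = c a (r j) := toRep ha hb
    _ = c a' (r j) := congrFun (hA' i a ha a' ha') j
    _ = c a' b' := (toRep ha' hb').symm

theorem IsCrossHomogeneous.of_le_iff_le {L : Type u} [PartialOrder L] {ι : Type v} {A : ι → Set L}
    (hA : ∀ i, (A i).Nontrivial) (h : ∀ i j, i ≠ j →
      ∀ a ∈ A i, ∀ a' ∈ A i, ∀ b ∈ A j, ∀ b' ∈ A j, (a ≤ b ↔ a' ≤ b')) :
    IsCrossHomogeneous A := by
  choose r hr using fun i => (hA i).nonempty
  have hne {i j : ι} (hij : i ≠ j) : r i ≠ r j := by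
    intro heq
    obtain ⟨a, ha, hne⟩ := (hA i).exists_ne (r i)
    refine hne (le_antisymm ?_ ?_)
    · exact heq ▸ (h i j hij _ (hr i) a ha _ (hr j) _ (hr j)).1 heq.le
    · exact heq ▸ (h j i hij.symm _ (hr j) _ (hr j) _ (hr i) a ha).1 heq.ge
  refine ⟨fun i j => CompType.ofPair (r i) (r j), fun i j hij a ha b hb => ?_⟩
  exact CompType.rel_congr (h i j hij _ (hr i) a ha _ (hr j) b hb)
    (h j i hij.symm _ (hr j) b hb _ (hr i) a ha) (CompType.rel_ofPair (hne hij))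

theorem exists_isCrossHomogeneous_subset {L I : Type u} [PartialOrder L] [LinearOrder I]
    {A : I → Set L} (hreg : ∀ i, (#(A i)).IsRegular) (hinf : ℵ₀ ≤ #I)
    (hsize : ∀ i, 2 ^ (#I + Cardinal.sum fun j : Set.Iio i => #(A j)) < #(A i)) :
    ∃ A' : I → Set L, (∀ i, A' i ⊆ A i) ∧ (∀ i, #(A' i) = #(A i)) ∧ IsCrossHomogeneous A' := by
  have hcolors (i : I) {U : Type u} (hU : #U ≤ #I + Cardinal.sum fun j : Set.Iio i => #(A j)) :
      #(U → ULift.{u} (Prop × Prop)) < #(A i) :=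
    have hs : ℵ₀ ≤ #I + Cardinal.sum fun j : Set.Iio i => #(A j) := hinf.trans le_self_add
    (power_def _ U).symm.trans_lt <| (power_le_two_power hs
      ((lt_aleph0_of_finite (ULift.{u} (Prop × Prop))).le.trans hs) hU).trans_lt (hsize i)
  obtain ⟨A', hsub, hcard, hA'⟩ := exists_subset_mk_eq_forall_lt_eq
    (fun a b : L => ULift.up.{u} (a ≤ b, b ≤ a)) hreg
    (fun i => hcolors i (mk_iUnion_le_sum_mk.trans le_add_self))
    (fun i => hcolors i le_self_add)
  have hA'pair {i j : I} (hij : i < j) {a a' b b' : L} (ha : a ∈ A' i) (ha' : a' ∈ A' i)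
      (hb : b ∈ A' j) (hb' : b' ∈ A' j) : (a ≤ b, b ≤ a) = (a' ≤ b', b' ≤ a') :=
    congrArg ULift.down (hA' i j hij a ha a' ha' b hb b' hb')
  refine ⟨A', hsub, hcard, .of_le_iff_le (fun i => ?_) ?_⟩
  · rw [← Set.nontrivial_coe_sort, ← one_lt_iff_nontrivial, hcard]
    exact one_lt_aleph0.trans_le (hreg i).aleph0_le
  · intro i j hij a ha a' ha' b hb b' hb'
    obtain hlt | hgt := hij.lt_or_gt
    · exact iff_of_eq (congrArg Prod.fst (hA'pair hlt ha ha' hb hb'))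
    · exact iff_of_eq (congrArg Prod.snd (hA'pair hgt hb hb' ha ha'))

theorem exists_cofinal_cardinals (κ : Cardinal.{u}) :
    ∃ (I : Type u) (_ : LinearOrder I) (_ : WellFoundedLT I) (g : I → Cardinal.{u}),
      #I = κ.ord.cof ∧ (∀ i : I, #(Set.Iio i) < #I) ∧ (∀ i, g i < κ) ∧ ∀ μ < κ, ∃ i, μ ≤ g i := by
  obtain ⟨s, hs, hstype⟩ := Ordinal.exists_ord_cof_eq κ.ord.ToType
  have hcard : #s = Order.cof κ.ord.ToType := by
    rw [← Ordinal.card_type LT.lt, hstype, card_ord]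
  refine ⟨s, inferInstance, inferInstance, fun i => #(Set.Iio i.1), ?_, fun i => ?_,
    fun i => ?_, fun μ hμ => ?_⟩
  · rw [hcard, Ordinal.cof_toType]
  · exact mk_Iio_lt i (by rw [hcard, hstype])
  · exact (mk_Iio_lt i.1 (by simp)).trans_eq (mk_ord_toType κ)
  · obtain ⟨x, hx⟩ : ∃ x : κ.ord.ToType, Ordinal.typein LT.lt x = μ.ord :=
      Ordinal.typein_surj LT.lt (by simpa using hμ)
    have hxμ : #(Set.Iio x) = μ := (congrArg Ordinal.card hx).trans (card_ord μ)
    obtain ⟨y, hys, hxy⟩ := hs x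
    exact ⟨⟨y, hys⟩, hxμ.ge.trans (mk_le_mk_of_subset (Set.Iio_subset_Iio hxy))⟩

section BlockSize

variable {I : Type u} [LinearOrder I] [WellFoundedLT I]

/-- Recursively chosen cardinals, each regular, above `g`, and large enough for the refinement of
`exists_isCrossHomogeneous_subset` to go through. -/
noncomputable def blockSize (g : I → Cardinal.{u}) : I → Cardinal.{u} :=
  wellFounded_lt.fix fun i θ =>
    Order.succ (2 ^ (g i + (#I + Cardinal.sum fun j : Set.Iio i => θ j j.2)))

variable (g : I → Cardinal.{u})

theorem blockSize_eq_succ (i : I) : blockSize g i =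
    Order.succ (2 ^ (g i + (#I + Cardinal.sum fun j : Set.Iio i => blockSize g j))) :=
  WellFounded.fix_eq _ _ _

theorem two_power_lt_blockSize (i : I) :
    2 ^ (#I + Cardinal.sum fun j : Set.Iio i => blockSize g j) < blockSize g i := by
  rw [blockSize_eq_succ g i, Order.lt_succ_iff]
  exact power_le_power_left two_ne_zero le_add_self

theorem lt_blockSize (i : I) : g i < blockSize g i := by
  rw [blockSize_eq_succ, Order.lt_succ_iff]
  exact le_self_add.trans (cantor _).le

theorem mk_lt_blockSize (i : I) : #I < blockSize g i :=
  le_self_add.trans_lt ((cantor _).trans (two_power_lt_blockSize g i))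

theorem isRegular_blockSize (hI : ℵ₀ ≤ #I) (i : I) : (blockSize g i).IsRegular := by
  rw [blockSize_eq_succ]
  exact isRegular_succ ((hI.trans (le_self_add.trans le_add_self)).trans (cantor _).le)

theorem strictMono_blockSize : StrictMono (blockSize g) := fun i j hij =>
  calc blockSize g i ≤ Cardinal.sum fun k : Set.Iio j => blockSize g k :=
        Cardinal.le_sum (fun k : Set.Iio j => blockSize g k) ⟨i, hij⟩
    _ ≤ #I + Cardinal.sum fun k : Set.Iio j => blockSize g k := le_add_self
    _ < blockSize g j := (cantor _).trans (two_power_lt_blockSize g j)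

variable {g}

theorem blockSize_lt {κ : Cardinal.{u}} (hκ : κ.IsStrongLimit) (hI : #I < κ)
    (hIio : ∀ i : I, #(Set.Iio i) < κ.ord.cof) (hg : ∀ i, g i < κ) (i : I) :
    blockSize g i < κ := by
  induction i using WellFoundedLT.induction with
  | ind i ih =>
    have hκ₀ := hκ.aleph0_le
    have hsum : (Cardinal.sum fun j : Set.Iio i => blockSize g j) < κ :=
      (sum_le_mk_mul_iSup _).trans_lt <| mul_lt_of_lt hκ₀
        ((mk_set_le _).trans_lt hI) (iSup_lt_of_lt_cof_ord (hIio i) fun j => ih j j.2)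
    rw [blockSize_eq_succ]
    exact hκ.isSuccLimit.succ_lt <| hκ.isStrongPrelimit <|
      add_lt_of_lt hκ₀ (hg i) (add_lt_of_lt hκ₀ hI hsum)

theorem isExhausting_blockSize {κ : Cardinal.{u}} (hI : #I = κ.ord.cof)
    (hIio : ∀ i : I, #(Set.Iio i) < #I) (hg : ∀ μ < κ, ∃ i, μ ≤ g i) :
    IsExhausting κ (blockSize g) where
  mk_index := hI
  mk_index_le i := (mk_lt_blockSize g i).le
  exists_lt J hJ μ hμ := by
    obtain ⟨i, hi⟩ := hg μ hμ
    obtain ⟨j, hjJ, hij⟩ : ∃ j ∈ J, i ≤ j := by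
      by_contra! hbelow
      exact ((mk_le_mk_of_subset hbelow).trans_lt (hIio i)).ne hJ
    exact ⟨j, hjJ, hi.trans_lt <| (lt_blockSize g i).trans_le <|
      (strictMono_blockSize g).monotone hij⟩

end BlockSize

theorem exists_isUniform_family {L : Type u} [PartialOrder L] {κ : Cardinal.{u}}
    (hκ : κ.IsStrongLimit) (hsing : κ.ord.cof < κ) {X : Set L} (hX : κ ≤ #X) :
    ∃ (I : Type u) (A : I → Set L), (∀ i, A i ⊆ X) ∧ (∀ i, IsUniform (A i)) ∧
      IsCrossHomogeneous A ∧ IsExhausting κ fun i => #(A i) := by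
  obtain ⟨I, _, _, g, hI, hIio, hgκ, hg⟩ := exists_cofinal_cardinals κ
  have hinf : ℵ₀ ≤ #I := (aleph0_le_cof_ord hκ.aleph0_le).trans_eq hI.symm
  have hreg := isRegular_blockSize g hinf
  have hlt (i : I) : 2 ^ blockSize g i < κ := hκ.isStrongPrelimit <|
    blockSize_lt hκ (hI.trans_lt hsing) (fun i => (hIio i).trans_eq hI) hgκ i
  choose B hBX hBcard hB using fun i =>
    exists_isUniform_of_two_power_lt (hreg i).aleph0_le ((hlt i).trans_le hX)
  obtain ⟨A, hAB, hAcard, hA⟩ := exists_isCrossHomogeneous_subset (A := B)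
    (fun i => hBcard i ▸ hreg i) hinf
    (fun i => by simpa only [hBcard] using two_power_lt_blockSize g i)
  refine ⟨I, A, fun i => (hAB i).trans (hBX i), fun i => (hB i).subset (hAB i), hA, ?_⟩
  simpa only [hAcard, hBcard] using isExhausting_blockSize hI hIio hg

theorem exists_isCanonical_family {L : Type u} [PartialOrder L] {κ : Cardinal.{u}}
    (hκ : κ.IsStrongLimit) (hsing : κ.ord.cof < κ) {X : Set L} (hX : κ ≤ #X) :
    ∃ (I : Type u) (A : I → Set L), (∀ i, A i ⊆ X) ∧ IsCanonical A ∧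
      IsExhausting κ fun i => #(A i) := by
  obtain ⟨I, A, hAX, hA, hcross, hsize⟩ := exists_isUniform_family hκ hsing hX
  have hinf := hsize.aleph0_le_mk_index hκ.aleph0_le
  let P : Fin 3 → Set L → Prop := ![IsAntichain (· ≤ ·), IsWellChain, IsCoWellChain]
  have hP (i : I) : ∃ k : ULift.{u} (Fin 3), P k.down (A i) := by
    obtain h | h | h := hA i
    exacts [⟨⟨0⟩, h⟩, ⟨⟨1⟩, h⟩, ⟨⟨2⟩, h⟩]
  choose kind hkind using hP
  obtain ⟨k, hk⟩ := infinite_pigeonhole kind hinf (mk_lt_cof_ord_of_finite hinf)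
  let J := kind ⁻¹' {k}
  have hJ (j : J) : P k.down (A j) := j.2 ▸ hkind j
  refine ⟨J, A ∘ (↑), fun j => hAX j, ⟨?_, hcross.comp Subtype.val_injective⟩, hsize.restrict hk⟩
  obtain ⟨k⟩ := k
  fin_cases k
  exacts [.inl hJ, .inr (.inl hJ), .inr (.inr hJ)]

/-- Main lemma: if `L` is a bounded partial order and `κ ≤ |L|` is a singular strong limit
cardinal, then `ν(L) > κ`; if moreover `cf(κ) = ℵ₀`, then `ν(L) > 2^κ`. -/
theorem main_lemma (L : Type u) [PartialOrder L] [BoundedOrder L] (κ : Cardinal.{u})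
    (hκ : κ.IsStrongLimit) (hsing : κ.ord.cof < κ) (hL : κ ≤ #L) :
    κ < nu L ∧ (κ.ord.cof = ℵ₀ → 2 ^ κ < nu L) := by
  have hκ₀ := hκ.aleph0_le
  have := infinite_iff.2 (hκ₀.trans hL)
  obtain ⟨I, A, hA, hcan, hsize⟩ :=
    exists_isCanonical_family hκ hsing (hL.trans_eq (mk_compl_pair_of_infinite (⊥ : L) ⊤).symm)
  have hbot (i : I) : ⊥ ∉ A i := fun h => hA i h (.inl rfl)
  have htop (i : I) : ⊤ ∉ A i := fun h => hA i h (.inr rfl)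
  have hcross : IsCrossHomogeneous A := hcan.2
  obtain hblocks | hdual : ((∀ i, IsAntichain (· ≤ ·) (A i)) ∨ ∀ i, IsWellChain (A i)) ∨
      ∀ i, IsCoWellChain (A i) := or_assoc.2 hcan.1
  · exact ⟨hcross.lt_nu hblocks htop hsize hκ₀, hcross.two_power_lt_nu hblocks htop hsize hκ₀⟩
  · have hwell (i : I) : IsWellChain (OrderDual.ofDual ⁻¹' A i : Set Lᵒᵈ) :=
      ⟨(hdual i).1.symm, (hdual i).2⟩
    rw [← nu_orderDual]
    exact ⟨hcross.orderDual.lt_nu (.inr hwell) hbot hsize hκ₀,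
      hcross.orderDual.two_power_lt_nu (.inr hwell) hbot hsize hκ₀⟩
end
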